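/- Let X have the exponential distribution with parameter 1 and let t = r·q/e. If 2 ≤ q ≤ p ≤ 2q and 0 ≤ r ≤ 2r₀, where r₀ = e·W(1/e), then ‖X − t‖_p ≤ C₀·(p/q)·‖X − t‖_q, where C₀ = e^{W(1/e)} = 1/r₀. -/

import Mathlib

open MeasureTheory

/-- `‖X - t‖ₛ` for `X` exponential with parameter 1:
`(∫_0^∞ e^{-x} |x - t|^s dx)^{1/s}`. -/
noncomputable def expShiftNorm (s t : ℝ) : ℝ :=
  (∫ x in Set.Ioi (0 : ℝ), Real.exp (-x) * |x - t| ^ s) ^ (1 / s)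

/-!
Split the `s`-th absolute moment of `X - t` at `t`: the part of the integral over `(t, ∞)` is
`e^{-t} Γ(s + 1)`, and on `(0, t]` one has `|x - t| ≤ t ≤ q`. On both parts, passing from exponent
`q` to exponent `p` costs at most the factor `(p/q)^{p+1} q^{p-q} e^{q-p}`: on the tail because
`x ≤ p e^{x/p - 1}`, on the head because `e^{p-q} ≤ (p/q)^p`. By the Stirling-type bound
`q^q e^{1-q} ≤ Γ(q + 1)` this factor is at most `(p/q)^p Γ(q + 1)^{p/q - 1}`, and `Γ(q + 1)` is at
most `e^t` times the `q`-th moment. Taking `p`-th roots gives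
`‖X - t‖_p ≤ e^{t (1/q - 1/p)} (p/q) ‖X - t‖_q`, whose exponent is at most `w` when `t ≤ 2 w q` and
`p ≤ 2 q`.
-/

open Real Set

/-- The absolute moment `E |X - t|^s` of the exponential variable `X` shifted by `t`, that is,
`‖X - t‖ₛ` before the `s`-th root is taken. -/
noncomputable def expShiftMoment (s t : ℝ) : ℝ :=
  ∫ x in Ioi (0 : ℝ), exp (-x) * |x - t| ^ s

lemma expShiftNorm_eq_expShiftMoment_rpow (s t : ℝ) :
    expShiftNorm s t = expShiftMoment s t ^ (1 / s) := rfl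

lemma expShiftMoment_nonneg (s t : ℝ) : 0 ≤ expShiftMoment s t :=
  setIntegral_nonneg measurableSet_Ioi fun _ _ ↦ by positivity

lemma expShiftNorm_nonneg (s t : ℝ) : 0 ≤ expShiftNorm s t :=
  rpow_nonneg (expShiftMoment_nonneg s t) _

section Elementary

variable {p q x a : ℝ}

lemma rpow_le_rpow_mul_exp (hx : 0 ≤ x) (hp : 0 < p) (ha : 0 ≤ a) :
    x ^ a ≤ p ^ a * exp (a * (x / p - 1)) := by
  have hxp : x ≤ p * exp (x / p - 1) := by
    rw [← div_le_iff₀' hp]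
    linarith [add_one_le_exp (x / p - 1)]
  calc x ^ a ≤ (p * exp (x / p - 1)) ^ a := rpow_le_rpow hx hxp ha
    _ = p ^ a * exp (a * (x / p - 1)) := by
      rw [mul_rpow hp.le (exp_pos _).le, ← exp_mul, mul_comm (x / p - 1)]

lemma exp_neg_mul_rpow_le (hx : 0 ≤ x) (hq : 0 < q) (hqp : q ≤ p) :
    exp (-x) * x ^ p ≤ p ^ (p - q) * exp (q - p) * (x ^ q * exp (-(q / p * x))) := by
  have hp : 0 < p := hq.trans_le hqp
  calc exp (-x) * x ^ p = exp (-x) * (x ^ (p - q) * x ^ q) := by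
        rw [← rpow_add_of_nonneg hx (sub_nonneg.2 hqp) hq.le, sub_add_cancel]
    _ ≤ exp (-x) * (p ^ (p - q) * exp ((p - q) * (x / p - 1)) * x ^ q) := by
        gcongr
        exact rpow_le_rpow_mul_exp hx hp (sub_nonneg.2 hqp)
    _ = p ^ (p - q) * (exp (-x) * exp ((p - q) * (x / p - 1))) * x ^ q := by ring
    _ = p ^ (p - q) * (exp (q - p) * exp (-(q / p * x))) * x ^ q := by
        rw [← exp_add, ← exp_add]
        congr 3
        field_simp
        ring
    _ = p ^ (p - q) * exp (q - p) * (x ^ q * exp (-(q / p * x))) := by ring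

lemma rpow_self_mul_sub_le_rpow (hq : 1 ≤ q) (hx : 0 ≤ x) :
    q ^ q * (x - (q - 1)) ≤ x ^ q := by
  have hq0 : 0 < q := by linarith
  have hxq : 0 ≤ x / q := div_nonneg hx hq0.le
  calc q ^ q * (x - (q - 1)) = q ^ q * (1 + q * (x / q - 1)) := by
        field_simp
        ring
    _ ≤ q ^ q * (1 + (x / q - 1)) ^ q := by
        gcongr
        exact one_add_mul_self_le_rpow_one_add (by linarith) hq
    _ = x ^ q := by
        rw [add_sub_cancel, ← mul_rpow hq0.le hxq, mul_div_cancel₀ _ hq0.ne']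

lemma exp_sub_le_div_rpow (hp : 0 < p) (hq : 0 < q) : exp (p - q) ≤ (p / q) ^ p := by
  rw [rpow_def_of_pos (div_pos hp hq), exp_le_exp]
  calc p - q = (1 - (p / q)⁻¹) * p := by field_simp
    _ ≤ log (p / q) * p := by gcongr; exact one_sub_inv_le_log_of_pos (div_pos hp hq)

lemma one_le_div_rpow_mul_exp (hq : 0 < q) (hqp : q ≤ p) :
    1 ≤ (p / q) ^ (p + 1) * exp (q - p) := by
  have hpq : 1 ≤ p / q := (one_le_div hq).2 hqp
  calc 1 = exp (p - q) * exp (q - p) := by simp [← exp_add]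
    _ ≤ (p / q) ^ p * exp (q - p) := by
      gcongr
      exact exp_sub_le_div_rpow (hq.trans_le hqp) hq
    _ ≤ (p / q) ^ (p + 1) * exp (q - p) := by gcongr; linarith

lemma le_half_of_mul_exp_eq_exp_neg_one {w : ℝ} (hw : w * exp w = exp (-1)) : w ≤ 1 / 2 := by
  by_contra! h
  have hlt : w * 1 < w * exp w := by gcongr; exact one_lt_exp_iff.2 (by linarith)
  linarith [exp_neg_one_lt_d9]

end Elementary

section TailAndHead

variable {p q s t : ℝ}

lemma exp_neg_add_mul_abs_rpow {y : ℝ} (hy : 0 < y) (s t : ℝ) :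
    exp (-(y + t)) * |y + t - t| ^ s = exp (-t) * (exp (-y) * y ^ (s + 1 - 1)) := by
  rw [add_sub_cancel_right, add_sub_cancel_right, abs_of_pos hy, neg_add, exp_add]
  ring

lemma integrableOn_Ioi_exp_neg_mul_abs_sub_rpow (hs : -1 < s) (t : ℝ) :
    IntegrableOn (fun x ↦ exp (-x) * |x - t| ^ s) (Ioi t) := by
  rw [← (measurePreserving_add_right volume t).integrableOn_comp_preimage
    (measurableEmbedding_addRight t), preimage_add_const_Ioi, sub_self]
  exact IntegrableOn.congr_fun ((GammaIntegral_convergent (s := s + 1) (by linarith)).const_mul _)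
    (fun y hy ↦ (exp_neg_add_mul_abs_rpow hy s t).symm) measurableSet_Ioi

lemma integral_Ioi_exp_neg_mul_abs_sub_rpow (hs : -1 < s) (t : ℝ) :
    ∫ x in Ioi t, exp (-x) * |x - t| ^ s = exp (-t) * Gamma (s + 1) := by
  rw [← (measurePreserving_add_right volume t).setIntegral_preimage_emb
    (measurableEmbedding_addRight t), preimage_add_const_Ioi, sub_self,
    setIntegral_congr_fun measurableSet_Ioi fun y hy ↦ exp_neg_add_mul_abs_rpow hy s t,
    integral_const_mul, ← Gamma_eq_integral (by linarith)]

lemma integrableOn_Ioc_exp_neg_mul_abs_sub_rpow (hs : 0 ≤ s) (a b t : ℝ) :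
    IntegrableOn (fun x ↦ exp (-x) * |x - t| ^ s) (Ioc a b) := by
  have hcont : Continuous fun x : ℝ ↦ exp (-x) * |x - t| ^ s :=
    .mul (by fun_prop) (.rpow_const (by fun_prop) fun _ ↦ .inr hs)
  exact hcont.integrableOn_Ioc

lemma expShiftMoment_eq_head_add_tail (hs : 0 ≤ s) (ht : 0 ≤ t) :
    expShiftMoment s t =
      (∫ x in Ioc 0 t, exp (-x) * |x - t| ^ s) + exp (-t) * Gamma (s + 1) := by
  have hs' : -1 < s := by linarith
  rw [expShiftMoment, ← integral_Ioi_exp_neg_mul_abs_sub_rpow hs' t,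
    ← setIntegral_union (Ioc_disjoint_Ioi le_rfl) measurableSet_Ioi
      (integrableOn_Ioc_exp_neg_mul_abs_sub_rpow hs 0 t t)
      (integrableOn_Ioi_exp_neg_mul_abs_sub_rpow hs' t),
    Ioc_union_Ioi_eq_Ioi ht]

lemma integral_Ioc_exp_neg_mul_abs_sub_rpow_nonneg (s t : ℝ) :
    0 ≤ ∫ x in Ioc 0 t, exp (-x) * |x - t| ^ s :=
  setIntegral_nonneg measurableSet_Ioc fun _ _ ↦ by positivity

lemma integral_Ioc_exp_neg_mul_abs_sub_rpow_le (hq : 0 ≤ q) (hqp : q ≤ p) (t : ℝ) :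
    ∫ x in Ioc 0 t, exp (-x) * |x - t| ^ p ≤
      t ^ (p - q) * ∫ x in Ioc 0 t, exp (-x) * |x - t| ^ q := by
  rw [← integral_const_mul]
  refine setIntegral_mono_on (integrableOn_Ioc_exp_neg_mul_abs_sub_rpow (hq.trans hqp) 0 t t)
    ((integrableOn_Ioc_exp_neg_mul_abs_sub_rpow hq 0 t t).const_mul _) measurableSet_Ioc
    fun x hx ↦ ?_
  have hxt : |x - t| ≤ t := abs_le.2 ⟨by linarith [hx.1], by linarith [hx.1, hx.2]⟩
  calc exp (-x) * |x - t| ^ p = |x - t| ^ (p - q) * (exp (-x) * |x - t| ^ q) := by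
        rw [mul_left_comm, ← rpow_add_of_nonneg (abs_nonneg _) (sub_nonneg.2 hqp) hq,
          sub_add_cancel]
    _ ≤ t ^ (p - q) * (exp (-x) * |x - t| ^ q) := by gcongr

end TailAndHead

section GammaBounds

variable {p q : ℝ}

lemma rpow_self_mul_exp_one_sub_le_Gamma_add_one (hq : 1 ≤ q) :
    q ^ q * exp (1 - q) ≤ Gamma (q + 1) := by
  have hsub : Ioi (q - 1) ⊆ Ioi 0 := Ioi_subset_Ioi (by linarith)
  have hGamma : IntegrableOn (fun x ↦ exp (-x) * x ^ (q + 1 - 1)) (Ioi 0) :=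
    GammaIntegral_convergent (by linarith)
  -- Integrate Bernoulli's inequality over the half-line on which its lower bound is positive.
  calc q ^ q * exp (1 - q)
      = ∫ x in Ioi (q - 1), q ^ q * (exp (-x) * |x - (q - 1)| ^ (1 : ℝ)) := by
        rw [integral_const_mul, integral_Ioi_exp_neg_mul_abs_sub_rpow (by norm_num)]
        norm_num
    _ ≤ ∫ x in Ioi (q - 1), exp (-x) * x ^ (q + 1 - 1) := by
        refine setIntegral_mono_on
          ((integrableOn_Ioi_exp_neg_mul_abs_sub_rpow (by norm_num) _).const_mul _)
          (hGamma.mono_set hsub) measurableSet_Ioi fun x hx ↦ ?_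
        have hx : q - 1 < x := hx
        rw [mul_left_comm, add_sub_cancel_right, rpow_one, abs_of_pos (sub_pos.2 hx)]
        gcongr
        exact rpow_self_mul_sub_le_rpow hq (by linarith)
    _ ≤ ∫ x in Ioi 0, exp (-x) * x ^ (q + 1 - 1) :=
        setIntegral_mono_set hGamma
          (ae_restrict_of_forall_mem measurableSet_Ioi fun x (hx : 0 < x) ↦ by positivity)
          hsub.eventuallyLE
    _ = Gamma (q + 1) := (Gamma_eq_integral (by linarith)).symm

lemma div_mul_rpow_mul_exp_le_Gamma_rpow (hq : 1 ≤ q) (hqp : q ≤ p) :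
    p / q * (q ^ (p - q) * exp (q - p)) ≤ Gamma (q + 1) ^ (p / q - 1) := by
  have hq0 : 0 < q := by linarith
  have hpq : 0 ≤ p / q - 1 := sub_nonneg.2 ((one_le_div hq0).2 hqp)
  calc p / q * (q ^ (p - q) * exp (q - p))
      ≤ exp (p / q - 1) * (q ^ (p - q) * exp (q - p)) := by
        gcongr
        linarith [add_one_le_exp (p / q - 1)]
    _ = (q ^ q * exp (1 - q)) ^ (p / q - 1) := by
        rw [mul_rpow (by positivity) (exp_pos _).le, ← rpow_mul hq0.le, ← exp_mul, mul_left_comm,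
          ← exp_add]
        congr 2 <;> field_simp
        ring
    _ ≤ Gamma (q + 1) ^ (p / q - 1) := by
        gcongr
        exact rpow_self_mul_exp_one_sub_le_Gamma_add_one hq

lemma Gamma_add_one_le_mul_Gamma_add_one (hq : 0 < q) (hqp : q ≤ p) :
    Gamma (p + 1) ≤
      (p / q) ^ (p + 1) * (q ^ (p - q) * exp (q - p)) * Gamma (q + 1) := by
  have hp : 0 < p := hq.trans_le hqp
  have hpq : 0 < q / p := div_pos hq hp
  have hint : IntegrableOn (fun x ↦ x ^ (q + 1 - 1) * exp (-(q / p * x))) (Ioi 0) := by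
    simpa using integrableOn_rpow_mul_exp_neg_mul_rpow (p := 1) (s := q + 1 - 1) (by linarith)
      one_pos hpq
  calc Gamma (p + 1) = ∫ x in Ioi 0, exp (-x) * x ^ (p + 1 - 1) :=
        Gamma_eq_integral (by linarith)
    _ ≤ ∫ x in Ioi 0, p ^ (p - q) * exp (q - p) * (x ^ (q + 1 - 1) * exp (-(q / p * x))) :=
        setIntegral_mono_on (GammaIntegral_convergent (by linarith)) (hint.const_mul _)
          measurableSet_Ioi fun x hx ↦ by
            simpa only [add_sub_cancel_right] using exp_neg_mul_rpow_le (mem_Ioi.1 hx).le hq hqp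
    _ = p ^ (p - q) * exp (q - p) * ((p / q) ^ (q + 1) * Gamma (q + 1)) := by
        rw [integral_const_mul, integral_rpow_mul_exp_neg_mul_Ioi (by linarith) hpq, one_div_div]
    _ = (p / q) ^ (p + 1) * (q ^ (p - q) * exp (q - p)) * Gamma (q + 1) := by
        have hsplit : (p / q) ^ (p + 1) * q ^ (p - q) = p ^ (p - q) * (p / q) ^ (q + 1) := by
          rw [show p + 1 = p - q + (q + 1) by ring, rpow_add (div_pos hp hq), mul_right_comm,
            ← mul_rpow (by positivity) hq.le, div_mul_cancel₀ _ hq.ne']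
        rw [← mul_assoc ((p / q) ^ (p + 1)), hsplit]
        ring

end GammaBounds

section MomentComparison

variable {p q s t : ℝ}

lemma Gamma_add_one_le_exp_mul_expShiftMoment (hs : 0 ≤ s) (ht : 0 ≤ t) :
    Gamma (s + 1) ≤ exp t * expShiftMoment s t := by
  calc Gamma (s + 1) = exp t * (exp (-t) * Gamma (s + 1)) := by
        rw [← mul_assoc, ← exp_add, add_neg_cancel, exp_zero, one_mul]
    _ ≤ exp t * expShiftMoment s t := by
        rw [expShiftMoment_eq_head_add_tail hs ht]
        gcongr
        exact le_add_of_nonneg_left (integral_Ioc_exp_neg_mul_abs_sub_rpow_nonneg s t)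

lemma expShiftMoment_pos (hs : 0 ≤ s) (ht : 0 ≤ t) : 0 < expShiftMoment s t :=
  pos_of_mul_pos_right ((Gamma_pos_of_pos (by linarith)).trans_le
    (Gamma_add_one_le_exp_mul_expShiftMoment hs ht)) (exp_pos t).le

lemma expShiftMoment_le_mul_expShiftMoment (hq : 0 < q) (hqp : q ≤ p) (ht : 0 ≤ t) (htq : t ≤ q) :
    expShiftMoment p t ≤
      (p / q) ^ (p + 1) * (q ^ (p - q) * exp (q - p)) * expShiftMoment q t := by
  have head : t ^ (p - q) ≤ (p / q) ^ (p + 1) * (q ^ (p - q) * exp (q - p)) :=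
    calc t ^ (p - q) ≤ q ^ (p - q) := by gcongr
      _ ≤ q ^ (p - q) * ((p / q) ^ (p + 1) * exp (q - p)) :=
          le_mul_of_one_le_right (by positivity) (one_le_div_rpow_mul_exp hq hqp)
      _ = _ := mul_left_comm _ _ _
  have tail := Gamma_add_one_le_mul_Gamma_add_one hq hqp
  rw [expShiftMoment_eq_head_add_tail hq.le ht,
    expShiftMoment_eq_head_add_tail (hq.le.trans hqp) ht, mul_add, mul_left_comm _ (exp (-t))]
  gcongr
  exact (integral_Ioc_exp_neg_mul_abs_sub_rpow_le hq.le hqp t).trans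
    (mul_le_mul_of_nonneg_right head (integral_Ioc_exp_neg_mul_abs_sub_rpow_nonneg q t))

lemma expShiftMoment_le_exp_mul_rpow (hq : 1 ≤ q) (hqp : q ≤ p) (ht : 0 ≤ t) (htq : t ≤ q) :
    expShiftMoment p t ≤
      (p / q) ^ p * exp (t * (p / q - 1)) * expShiftMoment q t ^ (p / q) := by
  have hq0 : 0 < q := by linarith
  have hpq : 0 < p / q := div_pos (hq0.trans_le hqp) hq0
  have hM : 0 < expShiftMoment q t := expShiftMoment_pos hq0.le ht
  calc expShiftMoment p t
      ≤ (p / q) ^ (p + 1) * (q ^ (p - q) * exp (q - p)) * expShiftMoment q t :=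
        expShiftMoment_le_mul_expShiftMoment hq0 hqp ht htq
    _ = (p / q) ^ p * (p / q * (q ^ (p - q) * exp (q - p))) * expShiftMoment q t := by
        rw [rpow_add_one hpq.ne', mul_assoc ((p / q) ^ p)]
    _ ≤ (p / q) ^ p * Gamma (q + 1) ^ (p / q - 1) * expShiftMoment q t := by
        gcongr
        exact div_mul_rpow_mul_exp_le_Gamma_rpow hq hqp
    _ ≤ (p / q) ^ p * (exp t * expShiftMoment q t) ^ (p / q - 1) * expShiftMoment q t := by
        gcongr
        · exact sub_nonneg.2 ((one_le_div hq0).2 hqp)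
        · exact Gamma_add_one_le_exp_mul_expShiftMoment hq0.le ht
    _ = (p / q) ^ p * exp (t * (p / q - 1)) * expShiftMoment q t ^ (p / q) := by
        rw [mul_rpow (exp_pos t).le hM.le, ← exp_mul, rpow_sub_one hM.ne']
        field_simp

lemma expShiftNorm_le_exp_mul_expShiftNorm (hq : 1 ≤ q) (hqp : q ≤ p) (ht : 0 ≤ t) (htq : t ≤ q) :
    expShiftNorm p t ≤ exp (t * (1 / q - 1 / p)) * (p / q) * expShiftNorm q t := by
  have hq0 : 0 < q := by linarith
  have hp0 : 0 < p := hq0.trans_le hqp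
  have hM : 0 ≤ expShiftMoment q t := expShiftMoment_nonneg q t
  rw [expShiftNorm_eq_expShiftMoment_rpow, expShiftNorm_eq_expShiftMoment_rpow]
  calc expShiftMoment p t ^ (1 / p)
      ≤ ((p / q) ^ p * exp (t * (p / q - 1)) * expShiftMoment q t ^ (p / q)) ^ (1 / p) :=
        rpow_le_rpow (expShiftMoment_nonneg p t) (expShiftMoment_le_exp_mul_rpow hq hqp ht htq)
          (by positivity)
    _ = p / q * exp (t * (1 / q - 1 / p)) * expShiftMoment q t ^ (1 / q) := by
        rw [mul_rpow (by positivity) (by positivity), mul_rpow (by positivity) (exp_pos _).le,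
          ← rpow_mul (by positivity), ← rpow_mul hM, ← exp_mul,
          mul_one_div_cancel hp0.ne', rpow_one,
          show p / q * (1 / p) = 1 / q by field_simp,
          show t * (p / q - 1) * (1 / p) = t * (1 / q - 1 / p) by field_simp]
    _ = exp (t * (1 / q - 1 / p)) * (p / q) * expShiftMoment q t ^ (1 / q) := by
        rw [mul_comm (p / q)]

end MomentComparison

theorem expShiftNorm_le_of_small_r_general {w p q r t : ℝ} (hw : w ≤ 1 / 2)
    (ht : t = r * q / exp 1) (hq : 1 ≤ q) (hqp : q ≤ p) (hp2q : p ≤ 2 * q)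
    (hr0 : 0 ≤ r) (hr : r ≤ 2 * (exp 1 * w)) :
    expShiftNorm p t ≤ exp w * (p / q) * expShiftNorm q t := by
  have hq0 : 0 < q := by linarith
  have hp0 : 0 < p := hq0.trans_le hqp
  have ht0 : 0 ≤ t := by rw [ht]; positivity
  have htw : t ≤ 2 * w * q := by
    rw [ht, div_le_iff₀ (exp_pos 1)]
    linarith [mul_le_mul_of_nonneg_right hr hq0.le]
  have hw0 : 0 ≤ w := by nlinarith
  have htq : t ≤ q := by nlinarith
  have hexponent : t * (1 / q - 1 / p) ≤ w := by
    have hpq : 0 ≤ 1 / q - 1 / p := sub_nonneg.2 (one_div_le_one_div_of_le hq0 hqp)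
    have hratio : 1 / 2 ≤ q / p := by rw [div_le_div_iff₀ two_pos hp0]; linarith
    calc t * (1 / q - 1 / p) ≤ 2 * w * q * (1 / q - 1 / p) := by gcongr
      _ = 2 * w * (1 - q / p) := by field_simp
      _ ≤ 2 * w * (1 - 1 / 2) := by gcongr
      _ = w := by ring
  have hnorm : 0 ≤ expShiftNorm q t := expShiftNorm_nonneg q t
  refine (expShiftNorm_le_exp_mul_expShiftNorm hq hqp ht0 htq).trans ?_
  gcongr

/-- If `X` is exponential with parameter 1, `t = r q / e`, `2 ≤ q ≤ p ≤ 2q` and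
`0 ≤ r ≤ 2 r₀` where `r₀ = e W(1/e)`, then `‖X - t‖_p ≤ C₀ (p/q) ‖X - t‖_q` with
`C₀ = e^{W(1/e)} = 1/r₀`. -/
theorem expShiftNorm_le_of_small_r
    (w : ℝ) (hw : 0 < w) (hwe : w * Real.exp w = Real.exp (-1))
    (p q r t : ℝ) (ht : t = r * q / Real.exp 1)
    (hq : 2 ≤ q) (hqp : q ≤ p) (hp2q : p ≤ 2 * q)
    (hr0 : 0 ≤ r) (hr : r ≤ 2 * (Real.exp 1 * w)) :
    expShiftNorm p t ≤ Real.exp w * (p / q) * expShiftNorm q t := by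
  exact expShiftNorm_le_of_small_r_general (le_half_of_mul_exp_eq_exp_neg_one hwe) ht
    (one_le_two.trans hq) hqp hp2q hr0 hr
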